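/- Let (X,μ,S,T) be a free magic ergodic measure preserving system with commuting transformations S and T, and let W = I_S ∨ I_T. Then the σ-algebra of (T×T)-invariant sets of (X², μ_S) is measurable with respect to W ⊗ W; equivalently, for all f0, f1 ∈ L∞(μ), E(f0 ⊗ f1 | I_{T×T}) = E(E(f0|W) ⊗ E(f1|W) | I_{T×T}) holds μ_S-almost everywhere. -/

import Mathlib

open MeasureTheory Filter
open scoped symmDiff

/-- The σ-algebra of `R`-invariant measurable sets. -/
def invSigma {X : Type*} [MeasurableSpace X] (R : X → X) : MeasurableSpace X where
  MeasurableSet' s := MeasurableSet s ∧ R ⁻¹' s = s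
  measurableSet_empty := ⟨MeasurableSet.empty, rfl⟩
  measurableSet_compl s hs := ⟨hs.1.compl, by rw [Set.preimage_compl, hs.2]⟩
  measurableSet_iUnion f hf := ⟨MeasurableSet.iUnion fun i => (hf i).1, by
    rw [Set.preimage_iUnion]; exact Set.iUnion_congr fun i => (hf i).2⟩

/-- `μ2` is the relatively independent self-joining of `μ` over `I_R`. -/
def IsRelIndJoining {X : Type*} [MeasurableSpace X] (μ : Measure X) (R : X → X)
    (μ2 : Measure (X × X)) : Prop :=
  ∀ f0 f1 : X → ℝ, Measurable f0 → Measurable f1 →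
    (∃ C, ∀ x, |f0 x| ≤ C) → (∃ C, ∀ x, |f1 x| ≤ C) →
    ∫ p, f0 p.1 * f1 p.2 ∂μ2 =
      ∫ x, (μ[f0 | invSigma R]) x * (μ[f1 | invSigma R]) x ∂μ

/-- `μ4` is the relatively independent self-joining of `μ2` over `I_{T×T}`. -/
def IsHostJoining {X : Type*} [MeasurableSpace X] (μ2 : Measure (X × X)) (T : X → X)
    (μ4 : Measure (X × X × X × X)) : Prop :=
  ∀ f0 f1 f2 f3 : X → ℝ, Measurable f0 → Measurable f1 → Measurable f2 → Measurable f3 →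
    (∃ C, ∀ x, |f0 x| ≤ C) → (∃ C, ∀ x, |f1 x| ≤ C) →
    (∃ C, ∀ x, |f2 x| ≤ C) → (∃ C, ∀ x, |f3 x| ≤ C) →
    ∫ p, f0 p.1 * f1 p.2.1 * f2 p.2.2.1 * f3 p.2.2.2 ∂μ4 =
      ∫ q, (μ2[(fun r => f0 r.1 * f1 r.2) | invSigma (Prod.map T T)]) q *
           (μ2[(fun r => f2 r.1 * f3 r.2) | invSigma (Prod.map T T)]) q ∂μ2

/-- The Host seminorm `|||f|||_{μ,S,T}` of `f`, computed from the Host measure `μ_{S,T}`. -/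
noncomputable def hostSeminorm {X : Type*} [MeasurableSpace X]
    (μ4 : Measure (X × X × X × X)) (f : X → ℝ) : ℝ :=
  (∫ p, f p.1 * f p.2.1 * f p.2.2.1 * f p.2.2.2 ∂μ4) ^ ((1 : ℝ) / 4)

/-!
Write `I` for the σ-algebra of `T × T`-invariant sets. By the mean ergodic theorem for `T × T`,
the energy `‖E(f ⊗ g | I)‖₂²` is the limit of the averages over `n` of
`∫ E(f ∘ Tⁿ · f | I_S) E(g ∘ Tⁿ · g | I_S) dμ`. Applying the Cauchy–Schwarz inequality to these
averages shows that the square of the energy of `(f, g)` is at most the product of the energies of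
`(f, f)` and `(g, g)`, which are the fourth powers of the Host seminorms of `f` and `g`. Hence
`E(f ⊗ g | I)` vanishes as soon as one of the two seminorms does. In a magic system `f - E(f | W)`
has seminorm zero, so replacing `f` and `g` by `E(f | W)` and `E(g | W)` does not change
`E(f ⊗ g | I)`.

Let now `F` be bounded and `I`-measurable. Since `W ⊗ W` is preserved by `T × T`, the function
`E(F | W ⊗ W)` is again invariant. By the replacement property, integrating `F` or
`E(F | W ⊗ W)` against the indicator of a rectangle amounts to integrating it against the same
`W ⊗ W`-measurable function, so both have the same integral over every rectangle and agree almost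
everywhere.
-/

open scoped Topology
open MeasurableSpace (invariants)
open Function (Commute)

theorem comap_eq_self_of_measurable_symm {X : Type*} {m : MeasurableSpace X} {e : X ≃ X}
    (he : Measurable e) (he_symm : Measurable e.symm) : m.comap e = m :=
  (MeasurableEquiv.mk e he he_symm).measurableEmbedding.comap_eq

theorem comap_invariants_eq_self_of_commute {X : Type*} [MeasurableSpace X] {R : X → X}
    {T : X ≃ᵐ X} (h : Commute R T) : (invariants R).comap T = invariants R := by
  have h_symm : Commute R T.symm := h.inverses_right T.apply_symm_apply T.symm_apply_apply
  exact comap_eq_self_of_measurable_symm (e := T.toEquiv)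
    (MeasurableSpace.measurable_invariants_of_semiconj T.measurable h.symm.semiconj)
    (MeasurableSpace.measurable_invariants_of_semiconj T.symm.measurable h_symm.symm.semiconj)

/-! ### Conditional expectations and invariant σ-algebras -/

theorem condExp_comp_ae_eq {Y Z E : Type*} [NormedAddCommGroup E] [NormedSpace ℝ E]
    [CompleteSpace E] {mY : MeasurableSpace Y} {m mZ : MeasurableSpace Z} {ν : Measure Y}
    {ρ : Measure Z} {φ : Y → Z} (hm : m ≤ mZ) [hσ : SigmaFinite (ρ.trim hm)]
    (hφ : MeasurePreserving φ ν ρ) {f : Z → E} (hf : Integrable f ρ) :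
    ν[f ∘ φ | m.comap φ] =ᵐ[ν] ρ[f | m] ∘ φ := by
  have hφm : Measurable[m.comap φ, m] φ := comap_measurable φ
  have hle : m.comap φ ≤ mY := (MeasurableSpace.comap_mono hm).trans hφ.measurable.comap_le
  have map_trim : @Measure.map _ _ (m.comap φ) m φ (ν.trim hle) = ρ.trim hm := by
    refine @Measure.ext _ m _ _ fun s hs => ?_
    rw [@Measure.map_apply _ _ (m.comap φ) m _ _ hφm _ hs, trim_measurableSet_eq hle ⟨s, hs, rfl⟩,
      trim_measurableSet_eq hm hs, hφ.measure_preimage (hm s hs).nullMeasurableSet]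
  have : SigmaFinite (ν.trim hle) :=
    @SigmaFinite.of_map _ _ (m.comap φ) m _ φ
      (@Measurable.aemeasurable _ _ (m.comap φ) m _ _ hφm) (map_trim ▸ hσ)
  symm
  refine ae_eq_condExp_of_forall_setIntegral_eq hle
    (hφ.integrable_comp_of_integrable hf)
    (fun s _ _ => (hφ.integrable_comp_of_integrable integrable_condExp).integrableOn) ?_
    (stronglyMeasurable_condExp.comp_measurable hφm).aestronglyMeasurable
  rintro _ ⟨t, ht, rfl⟩ _
  have setIntegral_comp {g : Z → E} (hg : Integrable g ρ) :
      ∫ y in φ ⁻¹' t, (g ∘ φ) y ∂ν = ∫ z in t, g z ∂ρ := by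
    rw [← hφ.map_eq] at hg ⊢
    exact (setIntegral_map (hm t ht) hg.aestronglyMeasurable hφ.aemeasurable).symm
  rw [setIntegral_comp integrable_condExp, setIntegral_comp hf, setIntegral_condExp hm hf ht]

theorem integral_mul_condExp {Y : Type*} {m mY : MeasurableSpace Y} {ν : Measure Y} (hm : m ≤ mY)
    [SigmaFinite (ν.trim hm)] {f g : Y → ℝ} (hf : AEStronglyMeasurable[m] f ν)
    (hfg : Integrable (f * g) ν) (hg : Integrable g ν) :
    ∫ y, f y * (ν[g | m]) y ∂ν = ∫ y, f y * g y ∂ν :=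
  calc ∫ y, f y * (ν[g | m]) y ∂ν = ∫ y, (ν[f * g | m]) y ∂ν :=
        integral_congr_ae (condExp_mul_of_aestronglyMeasurable_left hf hfg hg).symm
    _ = ∫ y, f y * g y ∂ν := integral_condExp hm

theorem aestronglyMeasurable_invariants_of_comp_ae_eq {Y E : Type*} [MeasurableSpace Y]
    [ConditionallyCompleteLinearOrder E] [TopologicalSpace E] [OrderTopology E]
    [SecondCountableTopology E] {ν : Measure Y} {R : Y → Y}
    (hR : Measure.QuasiMeasurePreserving R ν ν) {g : Y → E} (hg : AEStronglyMeasurable g ν)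
    (hgR : g ∘ R =ᵐ[ν] g) : AEStronglyMeasurable[invariants R] g ν := by
  borelize E
  let g' := hg.mk g
  have hg' : Measurable g' := hg.stronglyMeasurable_mk.measurable
  have iterate_ae_eq (n : ℕ) : g' ∘ R^[n] =ᵐ[ν] g' := by
    induction n with
    | zero => rfl
    | succ n ih =>
      calc g' ∘ R^[n + 1] = (g' ∘ R^[n]) ∘ R := by rw [Function.iterate_succ, Function.comp_assoc]
        _ =ᵐ[ν] g' ∘ R := hR.ae_eq_comp ih
        _ =ᵐ[ν] g ∘ R := hR.ae_eq_comp hg.ae_eq_mk.symm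
        _ =ᵐ[ν] g := hgR
        _ =ᵐ[ν] g' := hg.ae_eq_mk
  -- The limsup along the orbit is a strictly invariant representative of `g`.
  let p : Y → E := fun y => limsup (fun n => g' (R^[n] y)) atTop
  have hp : Measurable p := .limsup fun n => hg'.comp (hR.measurable.iterate n)
  have hpR : p ∘ R = p := by
    funext y
    simpa only [p, Function.comp_apply, Function.iterate_succ_apply] using
      limsup_nat_add (fun n => g' (R^[n] y)) 1
  have hp_inv : Measurable[invariants R] p :=
    MeasurableSpace.measurable_invariants_dom.2 ⟨hp, fun s _ => by rw [hpR]⟩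
  refine ⟨p, hp_inv.stronglyMeasurable, hg.ae_eq_mk.trans ?_⟩
  filter_upwards [ae_all_iff.2 iterate_ae_eq] with y hy
  have : (fun n => g' (R^[n] y)) = fun _ => g' y := funext hy
  simp only [p, this, limsup_const]
  rfl

theorem aestronglyMeasurable_invariants_condExp {Y : Type*} {m mY : MeasurableSpace Y}
    {ν : Measure Y} {R : Y → Y} (hm : m ≤ mY) [SigmaFinite (ν.trim hm)]
    (hR : MeasurePreserving R ν ν) (hmR : m.comap R = m) {f : Y → ℝ} (hf : Integrable f ν)
    (hfR : f ∘ R =ᵐ[ν] f) : AEStronglyMeasurable[invariants R] (ν[f | m]) ν := by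
  refine aestronglyMeasurable_invariants_of_comp_ae_eq hR.quasiMeasurePreserving
    integrable_condExp.aestronglyMeasurable ?_
  calc ν[f | m] ∘ R =ᵐ[ν] ν[f ∘ R | m.comap R] := (condExp_comp_ae_eq hm hR hf).symm
    _ = ν[f ∘ R | m] := by rw [hmR]
    _ =ᵐ[ν] ν[f | m] := condExp_congr_ae hfR

theorem exists_measurableSet_ae_eq_of_aestronglyMeasurable_indicator {Y E : Type*}
    {m mY : MeasurableSpace Y} {ν : Measure Y} [TopologicalSpace E]
    [TopologicalSpace.MetrizableSpace E] [Zero E] {c : E} (hc : c ≠ 0) {s : Set Y}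
    (hs : AEStronglyMeasurable[m] (s.indicator fun _ => c) ν) :
    ∃ t, MeasurableSet[m] t ∧ s =ᵐ[ν] t := by
  obtain ⟨g, hg, hsg⟩ := hs
  borelize E
  refine ⟨g ⁻¹' {c}, hg.measurable (measurableSet_singleton c), ?_⟩
  filter_upwards [hsg] with y hy
  apply propext
  change y ∈ s ↔ g y = c
  rw [← hy]
  by_cases hys : y ∈ s <;> simp [hys, hc.symm]

/-! ### The mean ergodic theorem -/

theorem inner_toLp_eq_integral_mul {Y : Type*} [MeasurableSpace Y] {ν : Measure Y} {f g : Y → ℝ}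
    (hf : MemLp f 2 ν) (hg : MemLp g 2 ν) :
    inner ℝ (hf.toLp f) (hg.toLp g) = ∫ y, f y * g y ∂ν := by
  rw [L2.inner_def]
  refine integral_congr_ae ?_
  filter_upwards [hf.coeFn_toLp, hg.coeFn_toLp] with y hfy hgy
  rw [hfy, hgy, real_inner_comm]
  rfl

theorem sq_integral_mul_le {Y : Type*} [MeasurableSpace Y] {ν : Measure Y} {f g : Y → ℝ}
    (hf : MemLp f 2 ν) (hg : MemLp g 2 ν) :
    (∫ y, f y * g y ∂ν) ^ 2 ≤ (∫ y, f y * f y ∂ν) * ∫ y, g y * g y ∂ν := by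
  simpa only [inner_toLp_eq_integral_mul, sq] using
    real_inner_mul_inner_self_le (hf.toLp f) (hg.toLp g)

section MeanErgodic

variable {Y : Type*} [MeasurableSpace Y] {ν : Measure Y} {R : Y → Y}

theorem lpMeas_invariants_eq_eqLocus (hR : MeasurePreserving R ν ν) :
    lpMeas ℝ ℝ (invariants R) 2 ν =
      (Lp.compMeasurePreservingₗᵢ ℝ R hR).toLinearMap.eqLocus 1 := by
  ext f
  have coeFn_comp := Lp.coeFn_compMeasurePreserving f hR
  rw [mem_lpMeas_iff_aestronglyMeasurable, LinearMap.mem_eqLocus]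
  change _ ↔ Lp.compMeasurePreserving R hR f = f
  refine ⟨fun hf => Lp.ext (coeFn_comp.trans ?_), fun hf => ?_⟩
  · obtain ⟨g, hg, hfg⟩ := hf
    calc f ∘ R =ᵐ[ν] g ∘ R := hR.quasiMeasurePreserving.ae_eq_comp hfg
      _ = g := MeasurableSpace.comp_eq_of_measurable_invariants hg.measurable
      _ =ᵐ[ν] f := hfg.symm
  · rw [hf] at coeFn_comp
    exact aestronglyMeasurable_invariants_of_comp_ae_eq hR.quasiMeasurePreserving
      (Lp.aestronglyMeasurable f) coeFn_comp.symm

theorem tendsto_birkhoffAverage_condExpL2 (hR : MeasurePreserving R ν ν) (f : Lp ℝ 2 ν) :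
    Tendsto (birkhoffAverage ℝ (Lp.compMeasurePreserving R hR) id · f) atTop
      (𝓝 (condExpL2 ℝ ℝ (MeasurableSpace.invariants_le R) f : Lp ℝ 2 ν)) := by
  let U := (Lp.compMeasurePreservingₗᵢ (E := ℝ) (p := 2) ℝ R hR).toContinuousLinearMap
  simp only [condExpL2, ← Submodule.starProjection_apply, lpMeas_invariants_eq_eqLocus hR]
  exact U.tendsto_birkhoffAverage_orthogonalProjection
    (LinearIsometry.norm_toContinuousLinearMap_le _) f

theorem tendsto_average_integral_comp_iterate_mul [IsFiniteMeasure ν]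
    (hR : MeasurePreserving R ν ν) {f g : Y → ℝ} (hf : MemLp f 2 ν) (hg : MemLp g 2 ν) :
    Tendsto (fun N : ℕ => (N : ℝ)⁻¹ * ∑ n ∈ Finset.range N, ∫ y, f (R^[n] y) * g y ∂ν) atTop
      (𝓝 (∫ y, (ν[f | invariants R]) y * g y ∂ν)) := by
  have hle := MeasurableSpace.invariants_le R
  have hE : MemLp (ν[f | invariants R]) 2 ν := hf.condExp one_le_two
  have condExpL2_eq : (condExpL2 ℝ ℝ hle (hf.toLp f) : Lp ℝ 2 ν) = hE.toLp _ :=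
    Lp.ext ((hf.condExpL2_ae_eq_condExp hle).trans hE.coeFn_toLp.symm)
  have h := (tendsto_birkhoffAverage_condExpL2 hR (hf.toLp f)).inner
    (tendsto_const_nhds (x := hg.toLp g)) (𝕜 := ℝ)
  rw [condExpL2_eq, inner_toLp_eq_integral_mul] at h
  refine h.congr fun N => ?_
  simp only [birkhoffAverage, birkhoffSum, real_inner_smul_left, sum_inner, id,
    Lp.compMeasurePreserving_iterate, Lp.toLp_compMeasurePreserving, inner_toLp_eq_integral_mul,
    Function.comp_apply]

end MeanErgodic

/-! ### Functions determined by their integrals over rectangles -/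

theorem ae_eq_of_forall_setIntegral_prod_eq {α β E : Type*} [MeasurableSpace α]
    [MeasurableSpace β] [NormedAddCommGroup E] [NormedSpace ℝ E] [CompleteSpace E]
    {ρ : Measure (α × β)} {f g : α × β → E} (hf : Integrable f ρ) (hg : Integrable g ρ)
    (h : ∀ s t, MeasurableSet s → MeasurableSet t →
      ∫ p in s ×ˢ t, f p ∂ρ = ∫ p in s ×ˢ t, g p ∂ρ) : f =ᵐ[ρ] g := by
  have h_univ : ∫ p, f p ∂ρ = ∫ p, g p ∂ρ := by
    simpa only [Set.univ_prod_univ, setIntegral_univ] using h _ _ .univ .univ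
  suffices ∀ D, MeasurableSet D → ∫ p in D, f p ∂ρ = ∫ p in D, g p ∂ρ from
    hf.ae_eq_of_forall_setIntegral_eq f g hg fun D hD _ => this D hD
  intro D hD
  induction D, hD using MeasurableSpace.induction_on_inter generateFrom_prod.symm
    isPiSystem_prod with
  | empty => simp only [setIntegral_empty]
  | basic D hD =>
    obtain ⟨s, hs, t, ht, rfl⟩ := hD
    exact h s t hs ht
  | compl D hD ih => rw [setIntegral_compl hD hf, setIntegral_compl hD hg, h_univ, ih]
  | iUnion D hDisj hD ih =>
    rw [integral_iUnion hD hDisj hf.integrableOn, integral_iUnion hD hDisj hg.integrableOn]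
    exact tsum_congr ih

section CondExp

variable {Y : Type*} {I V mY : MeasurableSpace Y} {ν : Measure Y} [IsFiniteMeasure ν]

theorem integral_mul_eq_of_condExp_ae_eq (hI : I ≤ mY) {f u v : Y → ℝ} (hf : MemLp f 2 ν)
    (hu : MemLp u 2 ν) (hv : MemLp v 2 ν) (hfI : AEStronglyMeasurable[I] f ν)
    (huv : ν[u | I] =ᵐ[ν] ν[v | I]) : ∫ y, f y * u y ∂ν = ∫ y, f y * v y ∂ν :=
  calc ∫ y, f y * u y ∂ν = ∫ y, f y * (ν[u | I]) y ∂ν :=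
        (integral_mul_condExp hI hfI (hf.integrable_mul hu) (hu.integrable one_le_two)).symm
    _ = ∫ y, f y * (ν[v | I]) y ∂ν :=
        integral_congr_ae (huv.mono fun y hy => congrArg (f y * ·) hy)
    _ = ∫ y, f y * v y ∂ν :=
        integral_mul_condExp hI hfI (hf.integrable_mul hv) (hv.integrable one_le_two)

theorem integral_mul_eq_integral_condExp_mul (hI : I ≤ mY) (hV : V ≤ mY) {f u v : Y → ℝ}
    (hf : MemLp f 2 ν) (hu : MemLp u 2 ν) (hv : MemLp v 2 ν) (hfI : AEStronglyMeasurable[I] f ν)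
    (hfVI : AEStronglyMeasurable[I] (ν[f | V]) ν) (hvV : AEStronglyMeasurable[V] v ν)
    (huv : ν[u | I] =ᵐ[ν] ν[v | I]) :
    ∫ y, f y * u y ∂ν = ∫ y, (ν[f | V]) y * u y ∂ν :=
  calc ∫ y, f y * u y ∂ν = ∫ y, v y * f y ∂ν := by
        simp only [integral_mul_eq_of_condExp_ae_eq hI hf hu hv hfI huv, mul_comm]
    _ = ∫ y, v y * (ν[f | V]) y ∂ν :=
        (integral_mul_condExp hV hvV (hv.integrable_mul hf) (hf.integrable one_le_two)).symm
    _ = ∫ y, (ν[f | V]) y * v y ∂ν := by simp only [mul_comm]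
    _ = ∫ y, (ν[f | V]) y * u y ∂ν :=
        (integral_mul_eq_of_condExp_ae_eq hI (hf.condExp one_le_two) hu hv hfVI huv).symm

theorem ae_eq_condExp_of_forall_prod {α β : Type*} [MeasurableSpace α] [MeasurableSpace β]
    {ν : Measure (α × β)} [IsFiniteMeasure ν] {I V : MeasurableSpace (α × β)}
    (hI : I ≤ Prod.instMeasurableSpace) (hV : V ≤ Prod.instMeasurableSpace)
    {f : α × β → ℝ} (hf : MemLp f 2 ν) (hfI : AEStronglyMeasurable[I] f ν)
    (hfVI : AEStronglyMeasurable[I] (ν[f | V]) ν)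
    (h : ∀ s t, MeasurableSet s → MeasurableSet t → ∃ v, MemLp v 2 ν ∧
      AEStronglyMeasurable[V] v ν ∧ ν[((s ×ˢ t).indicator 1 : α × β → ℝ) | I] =ᵐ[ν] ν[v | I]) :
    f =ᵐ[ν] ν[f | V] := by
  refine ae_eq_of_forall_setIntegral_prod_eq (hf.integrable one_le_two) integrable_condExp
    fun s t hs ht => ?_
  have setIntegral_eq (g : α × β → ℝ) :
      ∫ p in s ×ˢ t, g p ∂ν = ∫ p, g p * (s ×ˢ t).indicator 1 p ∂ν := by
    rw [← integral_indicator (hs.prod ht)]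
    refine integral_congr_ae (.of_forall fun p => ?_)
    by_cases hp : p ∈ s ×ˢ t <;> simp [hp]
  obtain ⟨v, hv, hvV, huv⟩ := h s t hs ht
  have hu : MemLp ((s ×ˢ t).indicator (1 : α × β → ℝ)) 2 ν := (memLp_const 1).indicator (hs.prod ht)
  rw [setIntegral_eq, setIntegral_eq]
  exact integral_mul_eq_integral_condExp_mul hI hV hf hu hv hfI hfVI hvV huv

end CondExp

/-! ### Bounded functions and tensor products -/

/-- Bounded measurable real functions. Boundedness is required everywhere rather than almost
everywhere, so that the notion makes sense without a measure and depends on the σ-algebra only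
through measurability. -/
structure BddMeasurable {X : Type*} [MeasurableSpace X] (f : X → ℝ) : Prop where
  measurable : Measurable f
  bdd : ∃ C, ∀ x, |f x| ≤ C

namespace BddMeasurable

variable {X Y : Type*} [MeasurableSpace X] [MeasurableSpace Y] {f g : X → ℝ}

theorem comp (hf : BddMeasurable f) {φ : Y → X} (hφ : Measurable φ) : BddMeasurable (f ∘ φ) :=
  ⟨hf.measurable.comp hφ, hf.bdd.imp fun _ hC y => hC (φ y)⟩

theorem mul (hf : BddMeasurable f) (hg : BddMeasurable g) : BddMeasurable (f * g) := by
  obtain ⟨C, hC⟩ := hf.bdd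
  obtain ⟨D, hD⟩ := hg.bdd
  refine ⟨hf.measurable.mul hg.measurable, C * D, fun x => ?_⟩
  rw [Pi.mul_apply, abs_mul]
  exact mul_le_mul (hC x) (hD x) (abs_nonneg _) ((abs_nonneg _).trans (hC x))

theorem sub (hf : BddMeasurable f) (hg : BddMeasurable g) : BddMeasurable (f - g) := by
  obtain ⟨C, hC⟩ := hf.bdd
  obtain ⟨D, hD⟩ := hg.bdd
  exact ⟨hf.measurable.sub hg.measurable, C + D,
    fun x => (abs_sub _ _).trans (add_le_add (hC x) (hD x))⟩

theorem indicator_one {s : Set X} (hs : MeasurableSet s) :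
    BddMeasurable (s.indicator (1 : X → ℝ)) := by
  refine ⟨measurable_one.indicator hs, 1, fun x => ?_⟩
  by_cases hx : x ∈ s <;> simp [hx]

theorem memLp (hf : BddMeasurable f) (p : ENNReal) (μ : Measure X) [IsFiniteMeasure μ] :
    MemLp f p μ := by
  obtain ⟨C, hC⟩ := hf.bdd
  exact .of_bound hf.measurable.aestronglyMeasurable C (.of_forall hC)

theorem integrable (hf : BddMeasurable f) (μ : Measure X) [IsFiniteMeasure μ] :
    Integrable f μ :=
  (hf.memLp 1 μ).integrable le_rfl

end BddMeasurable

theorem exists_bddMeasurable_ae_eq_condExp {X : Type*} {m mX : MeasurableSpace X} (hm : m ≤ mX)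
    (μ : Measure X) {f : X → ℝ} (hf : BddMeasurable f) :
    ∃ w, BddMeasurable w ∧ Measurable[m] w ∧ w =ᵐ[μ] μ[f | m] := by
  obtain ⟨C, hC⟩ := hf.bdd
  have hbdd : ∀ᵐ x ∂μ, |(μ[f | m]) x| ≤ C := ae_bdd_abs_condExp_of_ae_bdd_abs (.of_forall hC)
  let w : X → ℝ := fun x => max (-C) (min C ((μ[f | m]) x))
  have hw : Measurable[m] w :=
    measurable_const.max (measurable_const.min stronglyMeasurable_condExp.measurable)
  have hw_bdd (x : X) : |w x| ≤ |C| := abs_le.2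
    ⟨(neg_le_neg (le_abs_self C)).trans (le_max_left _ _),
      max_le (neg_le_abs C) ((min_le_left _ _).trans (le_abs_self C))⟩
  refine ⟨w, ⟨hw.mono hm le_rfl, |C|, hw_bdd⟩, hw, ?_⟩
  filter_upwards [hbdd] with x hx
  simp only [w, min_eq_right (abs_le.1 hx).2, max_eq_right (abs_le.1 hx).1]

/-- The tensor product `f ⊗ g` of two functions. -/
def tensor {α β : Type*} (f : α → ℝ) (g : β → ℝ) : α × β → ℝ :=
  fun p => f p.1 * g p.2

theorem tensor_indicator_one {α β : Type*} (s : Set α) (t : Set β) :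
    tensor (s.indicator 1) (t.indicator 1) = (s ×ˢ t).indicator 1 :=
  funext fun _ => Set.indicator_prod_one.symm

theorem tensor_ae_eq {α β : Type*} [MeasurableSpace α] [MeasurableSpace β] {μ : Measure α}
    {ν : Measure β} {ρ : Measure (α × β)} (hfst : MeasurePreserving Prod.fst ρ μ)
    (hsnd : MeasurePreserving Prod.snd ρ ν) {f f' : α → ℝ} {g g' : β → ℝ} (hf : f =ᵐ[μ] f')
    (hg : g =ᵐ[ν] g') : tensor f g =ᵐ[ρ] tensor f' g' :=
  (hfst.quasiMeasurePreserving.ae_eq_comp hf).mul (hsnd.quasiMeasurePreserving.ae_eq_comp hg)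

theorem BddMeasurable.tensor {α β : Type*} [MeasurableSpace α] [MeasurableSpace β]
    {f : α → ℝ} {g : β → ℝ} (hf : BddMeasurable f) (hg : BddMeasurable g) :
    BddMeasurable (tensor f g) :=
  (hf.comp measurable_fst).mul (hg.comp measurable_snd)

/-! ### The Host energy -/

/-- The energy `‖E(f ⊗ g | I_{T×T})‖₂²` of a pair of functions. On the diagonal `f = g` this is
the fourth power of the Host seminorm. -/
noncomputable def hostEnergy {X : Type*} [MeasurableSpace X] (ν : Measure (X × X)) (T : X → X)
    (f g : X → ℝ) : ℝ :=
  ∫ p, (ν[tensor f g | invariants (Prod.map T T)]) p *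
    (ν[tensor f g | invariants (Prod.map T T)]) p ∂ν

section HostEnergy

variable {X : Type*} [MeasurableSpace X] {ν : Measure (X × X)} {T : X → X}

theorem hostEnergy_nonneg (f g : X → ℝ) : 0 ≤ hostEnergy ν T f g :=
  integral_nonneg fun _ => mul_self_nonneg _

theorem hostEnergy_eq_zero_iff [IsFiniteMeasure ν] {f g : X → ℝ} (hf : BddMeasurable f)
    (hg : BddMeasurable g) :
    hostEnergy ν T f g = 0 ↔ ν[tensor f g | invariants (Prod.map T T)] =ᵐ[ν] 0 := by
  have hE : MemLp (ν[tensor f g | invariants (Prod.map T T)]) 2 ν :=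
    ((hf.tensor hg).memLp 2 ν).condExp one_le_two
  rw [hostEnergy, integral_eq_zero_iff_of_nonneg (fun _ => mul_self_nonneg _)
    (hE.integrable_mul hE)]
  exact eventually_congr (.of_forall fun p => mul_self_eq_zero)

end HostEnergy

namespace IsHostJoining

variable {X : Type*} [MeasurableSpace X] {ν : Measure (X × X)} {T : X → X}
  {ρ : Measure (X × X × X × X)}

theorem hostSeminorm_eq (h : IsHostJoining ν T ρ) {f : X → ℝ} (hf : BddMeasurable f) :
    hostSeminorm ρ f = hostEnergy ν T f f ^ ((1 : ℝ) / 4) := by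
  have hm := hf.measurable
  have hb := hf.bdd
  rw [hostSeminorm, h f f f f hm hm hm hm hb hb hb hb]
  rfl

theorem hostSeminorm_eq_zero_iff [IsFiniteMeasure ν] (h : IsHostJoining ν T ρ) {f : X → ℝ}
    (hf : BddMeasurable f) :
    hostSeminorm ρ f = 0 ↔ ν[tensor f f | invariants (Prod.map T T)] =ᵐ[ν] 0 := by
  rw [h.hostSeminorm_eq hf, Real.rpow_eq_zero (hostEnergy_nonneg f f) (by norm_num),
    hostEnergy_eq_zero_iff hf hf]

end IsHostJoining

namespace IsRelIndJoining

variable {X : Type*} [MeasurableSpace X] {μ : Measure X} {S : X → X}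
  {ν : Measure (X × X)}

theorem integral_tensor (h : IsRelIndJoining μ S ν) {f g : X → ℝ} (hf : BddMeasurable f)
    (hg : BddMeasurable g) :
    ∫ p, tensor f g p ∂ν = ∫ x, (μ[f | invariants S]) x * (μ[g | invariants S]) x ∂μ :=
  -- `invSigma R` unfolds to Mathlib's `invariants R`.
  h f g hf.measurable hg.measurable hf.bdd hg.bdd

theorem measureReal_prod (h : IsRelIndJoining μ S ν) {s t : Set X} (hs : MeasurableSet s)
    (ht : MeasurableSet t) :
    ν.real (s ×ˢ t) =
      ∫ x, (μ[s.indicator 1 | invariants S]) x * (μ[t.indicator 1 | invariants S]) x ∂μ := by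
  rw [← h.integral_tensor (.indicator_one hs) (.indicator_one ht), tensor_indicator_one,
    integral_indicator_one (hs.prod ht)]

theorem measureReal_prod_univ [IsFiniteMeasure μ] (h : IsRelIndJoining μ S ν) {s : Set X}
    (hs : MeasurableSet s) :
    ν.real (s ×ˢ Set.univ) = μ.real s := by
  have condExp_one : μ[(1 : X → ℝ) | invariants S] = 1 :=
    condExp_const (MeasurableSpace.invariants_le S) 1
  simp only [h.measureReal_prod hs .univ, Set.indicator_univ, condExp_one, Pi.one_apply, mul_one,
    integral_condExp (MeasurableSpace.invariants_le S), integral_indicator_one hs]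

theorem measureReal_univ_prod [IsFiniteMeasure μ] (h : IsRelIndJoining μ S ν) {s : Set X}
    (hs : MeasurableSet s) :
    ν.real (Set.univ ×ˢ s) = μ.real s := by
  rw [← h.measureReal_prod_univ hs, h.measureReal_prod .univ hs, h.measureReal_prod hs .univ]
  simp only [mul_comm]

variable [IsProbabilityMeasure μ]

theorem isProbabilityMeasure (h : IsRelIndJoining μ S ν) : IsProbabilityMeasure ν := by
  have hν := h.measureReal_prod_univ .univ
  rw [Set.univ_prod_univ, probReal_univ (μ := μ)] at hν
  exact ⟨(ENNReal.toReal_eq_one_iff _).1 hν⟩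

theorem measurePreserving_fst (h : IsRelIndJoining μ S ν) : MeasurePreserving Prod.fst ν μ := by
  have := h.isProbabilityMeasure
  refine ⟨measurable_fst, Measure.ext fun s hs => ?_⟩
  rw [Measure.map_apply measurable_fst hs, ← Set.prod_univ, ← measureReal_eq_measureReal_iff,
    h.measureReal_prod_univ hs]

theorem measurePreserving_snd (h : IsRelIndJoining μ S ν) : MeasurePreserving Prod.snd ν μ := by
  have := h.isProbabilityMeasure
  refine ⟨measurable_snd, Measure.ext fun s hs => ?_⟩
  rw [Measure.map_apply measurable_snd hs, ← Set.univ_prod, ← measureReal_eq_measureReal_iff,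
    h.measureReal_univ_prod hs]

theorem measurePreserving_prodMap (h : IsRelIndJoining μ S ν) {T : X ≃ᵐ X}
    (hT : MeasurePreserving T μ μ) (hST : Commute S T) :
    MeasurePreserving (Prod.map T T) ν ν := by
  have := h.isProbabilityMeasure
  have hTT : Measurable (Prod.map T T) := T.measurable.prodMap T.measurable
  have condExp_preimage {s : Set X} (hs : MeasurableSet s) :
      μ[((T ⁻¹' s).indicator 1 : X → ℝ) | invariants S] =ᵐ[μ]
        μ[(s.indicator 1 : X → ℝ) | invariants S] ∘ T := by
    have h_comp := condExp_comp_ae_eq (MeasurableSpace.invariants_le S) hT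
      ((BddMeasurable.indicator_one hs).integrable μ)
    rwa [comap_invariants_eq_self_of_commute hST] at h_comp
  refine ⟨hTT, Measure.ext_prod fun {s t} hs ht => ?_⟩
  rw [Measure.map_apply hTT (hs.prod ht), ← measureReal_eq_measureReal_iff,
    Set.preimage_prod_map_prod, h.measureReal_prod (T.measurable hs) (T.measurable ht),
    h.measureReal_prod hs ht]
  refine (integral_congr_ae ?_).trans (hT.integral_comp T.measurableEmbedding _)
  filter_upwards [condExp_preimage hs, condExp_preimage ht] with x hsx htx
  rw [hsx, htx]
  rfl

section Energy

variable {T : X → X} {f g : X → ℝ}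

theorem tendsto_hostEnergy (h : IsRelIndJoining μ S ν) (hT : Measurable T)
    (hTT : MeasurePreserving (Prod.map T T) ν ν) (hf : BddMeasurable f) (hg : BddMeasurable g) :
    Tendsto (fun N : ℕ => (N : ℝ)⁻¹ * ∑ n ∈ Finset.range N,
      ∫ x, (μ[f ∘ T^[n] * f | invariants S]) x * (μ[g ∘ T^[n] * g | invariants S]) x ∂μ) atTop
      (𝓝 (hostEnergy ν T f g)) := by
  have := h.isProbabilityMeasure
  have hfg := (hf.tensor hg).memLp 2 ν
  have hE : hostEnergy ν T f g =
      ∫ p, (ν[tensor f g | invariants (Prod.map T T)]) p * tensor f g p ∂ν :=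
    integral_mul_condExp (MeasurableSpace.invariants_le _)
      stronglyMeasurable_condExp.aestronglyMeasurable
      ((hfg.condExp one_le_two).integrable_mul hfg) (hfg.integrable one_le_two)
  rw [hE]
  refine (tendsto_average_integral_comp_iterate_mul hTT hfg hfg).congr fun N => ?_
  congr! 2 with n
  have hTn : Measurable T^[n] := hT.iterate n
  rw [← h.integral_tensor ((hf.comp hTn).mul hf) ((hg.comp hTn).mul hg)]
  refine integral_congr_ae (.of_forall fun p => ?_)
  simp only [tensor, Prod.map_iterate, Prod.map_fst, Prod.map_snd, Pi.mul_apply,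
    Function.comp_apply]
  ring

theorem hostEnergy_sq_le (h : IsRelIndJoining μ S ν) (hT : Measurable T)
    (hTT : MeasurePreserving (Prod.map T T) ν ν) (hf : BddMeasurable f) (hg : BddMeasurable g) :
    hostEnergy ν T f g ^ 2 ≤ hostEnergy ν T f f * hostEnergy ν T g g := by
  refine le_of_tendsto_of_tendsto' ((h.tendsto_hostEnergy hT hTT hf hg).pow 2)
    ((h.tendsto_hostEnergy hT hTT hf hf).mul (h.tendsto_hostEnergy hT hTT hg hg)) fun N => ?_
  rw [mul_pow, mul_mul_mul_comm, ← sq]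
  have memLp_condExp {u : X → ℝ} (hu : BddMeasurable u) (n : ℕ) :
      MemLp (μ[u ∘ T^[n] * u | invariants S]) 2 μ :=
    (((hu.comp (hT.iterate n)).mul hu).memLp 2 μ).condExp one_le_two
  gcongr
  exact Finset.sum_sq_le_sum_mul_sum_of_sq_le_mul _
    (fun n _ => integral_nonneg fun _ => mul_self_nonneg _)
    (fun n _ => integral_nonneg fun _ => mul_self_nonneg _)
    fun n _ => sq_integral_mul_le (memLp_condExp hf n) (memLp_condExp hg n)

theorem condExp_tensor_ae_eq_zero_left (h : IsRelIndJoining μ S ν) (hT : Measurable T)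
    (hTT : MeasurePreserving (Prod.map T T) ν ν) (hf : BddMeasurable f) (hg : BddMeasurable g)
    (hff : ν[tensor f f | invariants (Prod.map T T)] =ᵐ[ν] 0) :
    ν[tensor f g | invariants (Prod.map T T)] =ᵐ[ν] 0 := by
  have := h.isProbabilityMeasure
  rw [← hostEnergy_eq_zero_iff hf hg, ← sq_nonpos_iff]
  refine (h.hostEnergy_sq_le hT hTT hf hg).trans_eq ?_
  rw [(hostEnergy_eq_zero_iff hf hf).2 hff, zero_mul]

theorem condExp_tensor_ae_eq_zero_right (h : IsRelIndJoining μ S ν) (hT : Measurable T)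
    (hTT : MeasurePreserving (Prod.map T T) ν ν) (hf : BddMeasurable f) (hg : BddMeasurable g)
    (hgg : ν[tensor g g | invariants (Prod.map T T)] =ᵐ[ν] 0) :
    ν[tensor f g | invariants (Prod.map T T)] =ᵐ[ν] 0 := by
  have := h.isProbabilityMeasure
  rw [← hostEnergy_eq_zero_iff hf hg, ← sq_nonpos_iff]
  refine (h.hostEnergy_sq_le hT hTT hf hg).trans_eq ?_
  rw [(hostEnergy_eq_zero_iff hg hg).2 hgg, mul_zero]

theorem condExp_tensor_congr (h : IsRelIndJoining μ S ν) (hT : Measurable T)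
    (hTT : MeasurePreserving (Prod.map T T) ν ν) {f' g' : X → ℝ} (hf : BddMeasurable f)
    (hf' : BddMeasurable f') (hg : BddMeasurable g) (hg' : BddMeasurable g')
    (hff' : ν[tensor (f - f') (f - f') | invariants (Prod.map T T)] =ᵐ[ν] 0)
    (hgg' : ν[tensor (g - g') (g - g') | invariants (Prod.map T T)] =ᵐ[ν] 0) :
    ν[tensor f g | invariants (Prod.map T T)] =ᵐ[ν]
      ν[tensor f' g' | invariants (Prod.map T T)] := by
  have := h.isProbabilityMeasure
  have h_left := h.condExp_tensor_ae_eq_zero_left hT hTT (hf.sub hf') hg hff'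
  have h_right := h.condExp_tensor_ae_eq_zero_right hT hTT hf' (hg.sub hg') hgg'
  have telescope : tensor f g = tensor (f - f') g + tensor f' (g - g') + tensor f' g' := by
    funext p
    simp only [tensor, Pi.add_apply, Pi.sub_apply]
    ring
  have integrable_tensor {u v : X → ℝ} (hu : BddMeasurable u) (hv : BddMeasurable v) :
      Integrable (tensor u v) ν := (hu.tensor hv).integrable ν
  have h_defect :
      ν[tensor (f - f') g + tensor f' (g - g') | invariants (Prod.map T T)] =ᵐ[ν] 0 := by
    filter_upwards [h_left, h_right, condExp_add (integrable_tensor (hf.sub hf') hg)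
      (integrable_tensor hf' (hg.sub hg')) (invariants (Prod.map T T))] with p hl hr hadd
    rw [hadd, Pi.add_apply, hl, hr, Pi.zero_apply, add_zero]
  rw [telescope]
  filter_upwards [h_defect, condExp_add
    ((integrable_tensor (hf.sub hf') hg).add (integrable_tensor hf' (hg.sub hg')))
    (integrable_tensor hf' hg') (invariants (Prod.map T T))] with p hp hadd
  rw [hadd, Pi.add_apply, hp, Pi.zero_apply, zero_add]

end Energy

end IsRelIndJoining

/-! ### Factors characteristic for the Host seminorm -/

section Factor

variable {X : Type*} {W : MeasurableSpace X} [mX : MeasurableSpace X] {μ : Measure X}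
  [IsProbabilityMeasure μ] {S T : X → X} {ν : Measure (X × X)}

theorem IsRelIndJoining.exists_condExp_tensor_ae_eq (h : IsRelIndJoining μ S ν)
    (hT : Measurable T) (hTT : MeasurePreserving (Prod.map T T) ν ν) (hW : W ≤ mX)
    (hW_char : ∀ f, BddMeasurable f → μ[f | W] =ᵐ[μ] 0 →
      ν[tensor f f | invariants (Prod.map T T)] =ᵐ[ν] 0)
    {f g : X → ℝ} (hf : BddMeasurable f) (hg : BddMeasurable g) :
    ∃ v, BddMeasurable v ∧ Measurable[W.prod W] v ∧ v =ᵐ[ν] tensor (μ[f | W]) (μ[g | W]) ∧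
      ν[tensor f g | invariants (Prod.map T T)] =ᵐ[ν] ν[v | invariants (Prod.map T T)] := by
  obtain ⟨u, hu, huW, hu_ae⟩ := exists_bddMeasurable_ae_eq_condExp hW μ hf
  obtain ⟨v, hv, hvW, hv_ae⟩ := exists_bddMeasurable_ae_eq_condExp hW μ hg
  have condExp_sub_ae_eq_zero {a b : X → ℝ} (ha : BddMeasurable a) (hb : BddMeasurable b)
      (hbW : Measurable[W] b) (hab : b =ᵐ[μ] μ[a | W]) : μ[a - b | W] =ᵐ[μ] 0 := by
    have condExp_b : μ[b | W] = b :=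
      condExp_of_stronglyMeasurable hW hbW.stronglyMeasurable (hb.integrable μ)
    filter_upwards [condExp_sub (ha.integrable μ) (hb.integrable μ) W, hab] with x hx hbx
    rw [hx, Pi.sub_apply, condExp_b, hbx, sub_self, Pi.zero_apply]
  refine ⟨tensor u v, hu.tensor hv, ?_, ?_, ?_⟩
  · exact (huW.comp (@measurable_fst X X W W)).mul (hvW.comp (@measurable_snd X X W W))
  · exact tensor_ae_eq h.measurePreserving_fst h.measurePreserving_snd hu_ae hv_ae
  · exact h.condExp_tensor_congr hT hTT hf hu hg hv
      (hW_char _ (hf.sub hu) (condExp_sub_ae_eq_zero hf hu huW hu_ae))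
      (hW_char _ (hg.sub hv) (condExp_sub_ae_eq_zero hg hv hvW hv_ae))

theorem IsRelIndJoining.ae_eq_condExp_prod_of_measurable_invariants (h : IsRelIndJoining μ S ν)
    (hT : Measurable T) (hTT : MeasurePreserving (Prod.map T T) ν ν) (hW : W ≤ mX)
    (hWT : W.comap T = W)
    (hW_char : ∀ f, BddMeasurable f → μ[f | W] =ᵐ[μ] 0 →
      ν[tensor f f | invariants (Prod.map T T)] =ᵐ[ν] 0)
    {f : X × X → ℝ} (hf : BddMeasurable f) (hf_inv : Measurable[invariants (Prod.map T T)] f) :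
    f =ᵐ[ν] ν[f | W.prod W] := by
  have := h.isProbabilityMeasure
  have hWW : W.prod W ≤ mX.prod mX :=
    sup_le_sup (MeasurableSpace.comap_mono hW) (MeasurableSpace.comap_mono hW)
  have hWW_comap : (W.prod W).comap (Prod.map T T) = W.prod W := by
    rw [MeasurableSpace.comap_prodMap, hWT]
  refine ae_eq_condExp_of_forall_prod (MeasurableSpace.invariants_le _) hWW (hf.memLp 2 ν)
    hf_inv.aestronglyMeasurable ?_ fun s t hs ht => ?_
  · exact aestronglyMeasurable_invariants_condExp hWW hTT hWW_comap (hf.integrable ν)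
      (.of_eq (MeasurableSpace.comp_eq_of_measurable_invariants hf_inv))
  · obtain ⟨v, hv, hvW, -, hv_ae⟩ := h.exists_condExp_tensor_ae_eq hT hTT hW hW_char
      (.indicator_one hs) (.indicator_one ht)
    rw [tensor_indicator_one] at hv_ae
    exact ⟨v, hv.memLp 2 ν, hvW.aestronglyMeasurable, hv_ae⟩

end Factor

theorem invariant_sets_measurable_wrt_W_general {X : Type*} {W : MeasurableSpace X}
    [mX : MeasurableSpace X] (μ : Measure X) [IsProbabilityMeasure μ] (S : X → X) (T : X ≃ᵐ X)
    (hT : MeasurePreserving T μ μ) (hST : Commute S T) (μS : Measure (X × X))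
    (hμS : IsRelIndJoining μ S μS) (μST : Measure (X × X × X × X))
    (hμST : IsHostJoining μS T μST) (hW : W ≤ mX) (hWT : W.comap T = W)
    (hW_char : ∀ f : X → ℝ, Measurable f → (∃ C, ∀ x, |f x| ≤ C) →
      μ[f | W] =ᵐ[μ] 0 → hostSeminorm μST f = 0) :
    (∀ s : Set (X × X), MeasurableSet[invSigma (Prod.map T T)] s →
      ∃ s' : Set (X × X), MeasurableSet[W.prod W] s' ∧ μS (s ∆ s') = 0) ∧
    (∀ f0 f1 : X → ℝ, Measurable f0 → Measurable f1 →
      (∃ C, ∀ x, |f0 x| ≤ C) → (∃ C, ∀ x, |f1 x| ≤ C) →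
      μS[(fun r => f0 r.1 * f1 r.2) | invSigma (Prod.map T T)] =ᵐ[μS]
        μS[(fun r => (μ[f0 | W]) r.1 * (μ[f1 | W]) r.2) | invSigma (Prod.map T T)]) := by
  have := hμS.isProbabilityMeasure
  have hTT := hμS.measurePreserving_prodMap hT hST
  have hW_zero (f : X → ℝ) (hf : BddMeasurable f) (hfW : μ[f | W] =ᵐ[μ] 0) :
      μS[tensor f f | invariants (Prod.map T T)] =ᵐ[μS] 0 :=
    (hμST.hostSeminorm_eq_zero_iff hf).1 (hW_char f hf.measurable hf.bdd hfW)
  refine ⟨fun s hs => ?_, fun f g hf hg hf_bdd hg_bdd => ?_⟩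
  · have hs_inv : Measurable[invariants (Prod.map T T)] (s.indicator (1 : X × X → ℝ)) :=
      measurable_const.indicator hs
    have h_ind := hμS.ae_eq_condExp_prod_of_measurable_invariants hT.measurable hTT hW hWT hW_zero
      (.indicator_one hs.1) hs_inv
    obtain ⟨s', hs', hss'⟩ := exists_measurableSet_ae_eq_of_aestronglyMeasurable_indicator
      (c := (1 : ℝ)) one_ne_zero
      (stronglyMeasurable_condExp.aestronglyMeasurable.congr h_ind.symm)
    exact ⟨s', hs', measure_symmDiff_eq_zero_iff.2 hss'⟩
  · obtain ⟨v, -, -, hv_ae, hv⟩ := hμS.exists_condExp_tensor_ae_eq hT.measurable hTT hW hW_zero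
      ⟨hf, hf_bdd⟩ ⟨hg, hg_bdd⟩
    exact hv.trans (condExp_congr_ae hv_ae)

/-- in a free ergodic magic system, the σ-algebra of `(T×T)`-invariant sets of
`(X², μ_S)` is measurable with respect to `W ⊗ W`, where `W = I_S ∨ I_T`; equivalently,
`E(f0 ⊗ f1 | I_{T×T}) = E(E(f0|W) ⊗ E(f1|W) | I_{T×T})` μ_S-a.e. -/
theorem invariant_sets_measurable_wrt_W {X : Type*} [MeasurableSpace X]
    (μ : Measure X) [IsProbabilityMeasure μ]
    (S T : X ≃ᵐ X) (hS : MeasurePreserving S μ μ) (hT : MeasurePreserving T μ μ)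
    (hcomm : ∀ x, S (T x) = T (S x))
    (herg : ∀ s : Set X, MeasurableSet s → ⇑S ⁻¹' s = s → ⇑T ⁻¹' s = s → μ s = 0 ∨ μ s = 1)
    (hfree : ∀ i j : ℤ, ¬(i = 0 ∧ j = 0) →
      μ {x | (S.toEquiv ^ i) ((T.toEquiv ^ j) x) = x} = 0)
    (μS : Measure (X × X)) (hμS : IsRelIndJoining μ ⇑S μS)
    (μST : Measure (X × X × X × X)) (hμST : IsHostJoining μS ⇑T μST)
    (hmagic : ∀ f : X → ℝ, Measurable f → (∃ C, ∀ x, |f x| ≤ C) →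
      ((μ[f | invSigma ⇑S ⊔ invSigma ⇑T]) =ᵐ[μ] 0 ↔ hostSeminorm μST f = 0)) :
    (∀ s : Set (X × X), MeasurableSet[invSigma (Prod.map ⇑T ⇑T)] s →
      ∃ s' : Set (X × X),
        MeasurableSet[(invSigma ⇑S ⊔ invSigma ⇑T).prod (invSigma ⇑S ⊔ invSigma ⇑T)] s' ∧
        μS (s ∆ s') = 0) ∧
    (∀ f0 f1 : X → ℝ, Measurable f0 → Measurable f1 →
      (∃ C, ∀ x, |f0 x| ≤ C) → (∃ C, ∀ x, |f1 x| ≤ C) →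
      (μS[(fun r => f0 r.1 * f1 r.2) | invSigma (Prod.map ⇑T ⇑T)]) =ᵐ[μS]
      (μS[(fun r => (μ[f0 | invSigma ⇑S ⊔ invSigma ⇑T]) r.1 *
            (μ[f1 | invSigma ⇑S ⊔ invSigma ⇑T]) r.2) | invSigma (Prod.map ⇑T ⇑T)])) := by
  refine invariant_sets_measurable_wrt_W_general μ S T hT hcomm μS hμS μST hμST
    (sup_le (MeasurableSpace.invariants_le S) (MeasurableSpace.invariants_le T)) ?_
    fun f hf hf_bdd => (hmagic f hf hf_bdd).1
  rw [MeasurableSpace.comap_sup]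
  exact congrArg₂ _ (comap_invariants_eq_self_of_commute hcomm)
    (comap_invariants_eq_self_of_commute (Function.Commute.refl T))
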